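/- For every even natural number t ≥ 2, ⌊(1 + √(2^(t+3) − 7))/2⌋ = ⌊√(2^(t+1)) + 0.5⌋ (floors of the indicated real numbers). -/

import Mathlib

/-- A subset `M` of `𝔽₂ᵗ` is Sidon if `m₁+m₂ ≠ m₃+m₄` for pairwise distinct elements. -/
def IsSidon {t : ℕ} (M : Finset (Fin t → ZMod 2)) : Prop :=
  ∀ m₁ ∈ M, ∀ m₂ ∈ M, ∀ m₃ ∈ M, ∀ m₄ ∈ M,
    (m₁ ≠ m₂ ∧ m₁ ≠ m₃ ∧ m₁ ≠ m₄ ∧ m₂ ≠ m₃ ∧ m₂ ≠ m₄ ∧ m₃ ≠ m₄) →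
    m₁ + m₂ ≠ m₃ + m₄

/-- `M` is sum-free if `m₁+m₂ ≠ m₃` for all `m₁,m₂,m₃ ∈ M`. -/
def IsSumFree {t : ℕ} (M : Finset (Fin t → ZMod 2)) : Prop :=
  ∀ m₁ ∈ M, ∀ m₂ ∈ M, ∀ m₃ ∈ M, m₁ + m₂ ≠ m₃

/-- A maximal Sidon set. -/
def IsMaximalSidon {t : ℕ} (M : Finset (Fin t → ZMod 2)) : Prop :=
  IsSidon M ∧ ∀ S : Finset (Fin t → ZMod 2), IsSidon S → M ⊆ S → S = M

/-- Maximum size of a Sidon set in `𝔽₂ᵗ`. -/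
noncomputable def sMax (t : ℕ) : ℕ :=
  sSup {n : ℕ | ∃ M : Finset (Fin t → ZMod 2), IsSidon M ∧ M.card = n}

/-- 2-sums of `M`. -/
def twoSums {t : ℕ} (M : Finset (Fin t → ZMod 2)) : Finset (Fin t → ZMod 2) :=
  (M ×ˢ M).image fun p => p.1 + p.2

/-- 2-star-sums of `M` (sums of two distinct elements). -/
def twoStarSums {t : ℕ} (M : Finset (Fin t → ZMod 2)) : Finset (Fin t → ZMod 2) :=
  ((M ×ˢ M).filter fun p => p.1 ≠ p.2).image fun p => p.1 + p.2

/-- 3-sums of `M`. -/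
def threeSums {t : ℕ} (M : Finset (Fin t → ZMod 2)) : Finset (Fin t → ZMod 2) :=
  ((M ×ˢ M) ×ˢ M).image fun p => p.1.1 + p.1.2 + p.2

/-- 3-star-sums of `M` (sums of three pairwise distinct elements). -/
def threeStarSums {t : ℕ} (M : Finset (Fin t → ZMod 2)) : Finset (Fin t → ZMod 2) :=
  (((M ×ˢ M) ×ˢ M).filter fun p => p.1.1 ≠ p.1.2 ∧ p.1.1 ≠ p.2 ∧ p.1.2 ≠ p.2).image
    fun p => p.1.1 + p.1.2 + p.2

/-- 4-sums of `M`. -/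
def fourSums {t : ℕ} (M : Finset (Fin t → ZMod 2)) : Finset (Fin t → ZMod 2) :=
  (((M ×ˢ M) ×ˢ M) ×ˢ M).image fun p => p.1.1.1 + p.1.1.2 + p.1.2 + p.2

/-!
For `x ≥ 1`, `n ≤ (1 + √x) / 2` amounts to `(2 * n - 1) ^ 2 ≤ x`, and an odd square has the form
`(2 * n - 1) ^ 2 = 8 * n.choose 2 + 1`. Since `√(2 * m) + 1 / 2 = (1 + √(8 * m)) / 2`, the two
floors are therefore the largest `n` with `8 * n.choose 2 + 1 ≤ 8 * m - 7` and the largest `n` with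
`8 * n.choose 2 + 1 ≤ 8 * m`, and both of these conditions say `n.choose 2 < m`.
-/

theorem two_mul_sub_one_sq_eq_choose_two {R : Type*} [CommRing R] (n : ℕ) :
    (2 * (n : R) - 1) ^ 2 = 8 * (n.choose 2 : R) + 1 := by
  induction n with
  | zero => simp
  | succ n ih =>
    rw [Nat.choose_succ_succ' n 1, Nat.choose_one_right]
    push_cast
    linear_combination ih

theorem le_floor_one_add_sqrt_div_two_iff {x : ℝ} (hx : 1 ≤ x) (n : ℕ) :
    n ≤ ⌊(1 + √x) / 2⌋₊ ↔ 8 * (n.choose 2 : ℝ) + 1 ≤ x := by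
  rcases n.eq_zero_or_pos with rfl | hn
  · simpa using hx
  have one_le_n : (1 : ℝ) ≤ n := by exact_mod_cast hn
  calc n ≤ ⌊(1 + √x) / 2⌋₊ ↔ (n : ℝ) ≤ (1 + √x) / 2 := Nat.le_floor_iff' hn.ne'
    _ ↔ 2 * (n : ℝ) - 1 ≤ √x := by constructor <;> intro h <;> linarith
    _ ↔ (2 * (n : ℝ) - 1) ^ 2 ≤ x := Real.le_sqrt' (by linarith)
    _ ↔ 8 * (n.choose 2 : ℝ) + 1 ≤ x := by rw [two_mul_sub_one_sq_eq_choose_two]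

theorem sqrt_add_half_eq_one_add_sqrt_four_mul_div_two (x : ℝ) :
    √x + 1 / 2 = (1 + √(4 * x)) / 2 := by
  have sqrt_four : √(4 : ℝ) = 2 := by norm_num
  rw [Real.sqrt_mul zero_le_four, sqrt_four]
  ring

theorem floor_identity_even_general {m : ℕ} (hm : 1 ≤ m) :
    ⌊(1 + √(8 * (m : ℝ) - 7)) / 2⌋₊ = ⌊√(2 * (m : ℝ)) + 1 / 2⌋₊ := by
  have one_le_m : (1 : ℝ) ≤ m := by exact_mod_cast hm
  refine eq_of_forall_le_iff fun n => ?_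
  calc n ≤ ⌊(1 + √(8 * (m : ℝ) - 7)) / 2⌋₊
      ↔ 8 * (n.choose 2 : ℝ) + 1 ≤ 8 * m - 7 :=
        le_floor_one_add_sqrt_div_two_iff (by linarith) n
    _ ↔ n.choose 2 < m := by rw [le_sub_iff_add_le]; norm_cast; omega
    _ ↔ 8 * (n.choose 2 : ℝ) + 1 ≤ 4 * (2 * m) := by norm_cast; omega
    _ ↔ n ≤ ⌊√(2 * (m : ℝ)) + 1 / 2⌋₊ := by
      rw [sqrt_add_half_eq_one_add_sqrt_four_mul_div_two,
        le_floor_one_add_sqrt_div_two_iff (by linarith)]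

theorem floor_identity_even (t : ℕ) (ht : 2 ≤ t) (hev : Even t) :
    ⌊(1 + Real.sqrt ((2 : ℝ) ^ (t + 3) - 7)) / 2⌋₊ =
      ⌊Real.sqrt ((2 : ℝ) ^ (t + 1)) + 0.5⌋₊ := by
  rw [show (2 : ℝ) ^ (t + 3) = 8 * (2 ^ t : ℕ) by push_cast; ring,
    show (2 : ℝ) ^ (t + 1) = 2 * (2 ^ t : ℕ) by push_cast; ring, show (0.5 : ℝ) = 1 / 2 by norm_num]
  exact floor_identity_even_general Nat.one_le_two_pow
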